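/- Let ω : A × B → k be a non-degenerate Hopf pairing between Hopf algebras over a field k, with inverse copairing Σ_i b_i ⊗ a_i, and assume the antipodes are bijective. For a left Yetter–Drinfel'd module (X, ρ, δ) over A, define Ω(X) to be X equipped with the left B-action b · x := ω(x_{(-1)}, S_B⁻²(b)) x_{(0)} and the left B-coaction δ_Ω(x) := Σ_i S_B²(b_i) ⊗ (a_i · x). Then: (1) Ω(X) is a left Yetter–Drinfel'd module over B; and (2) for left Yetter–Drinfel'd modules X and Y over A, the map Ω_2(X,Y) : Ω(X) ⊗ Ω(Y) → Ω(X ⊗ Y), x ⊗ y ↦ (y_{(-1)} · x) ⊗ y_{(0)} (using the A-structures), is a B-linear, B-colinear bijection. -/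

import Mathlib

open TensorProduct

noncomputable section

variable {k : Type*} [Field k]
variable {A : Type*} [Ring A] [HopfAlgebra k A]
variable {X Y Z : Type*} [AddCommGroup X] [Module k X] [AddCommGroup Y] [Module k Y]
  [AddCommGroup Z] [Module k Z]

/-- LHS of the left Yetter–Drinfel'd compatibility condition, as a linear map
`A ⊗ X → A ⊗ X` sending `h ⊗ x` to `h₍₁₎x₍₋₁₎ ⊗ h₍₂₎ · x₍₀₎`. -/
def ydL (act : A ⊗[k] X →ₗ[k] X) (coact : X →ₗ[k] A ⊗[k] X) :
    A ⊗[k] X →ₗ[k] A ⊗[k] X :=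
  TensorProduct.map (LinearMap.mul' k A) act
    ∘ₗ (TensorProduct.tensorTensorTensorComm k A A A X).toLinearMap
    ∘ₗ TensorProduct.map (Coalgebra.comul (R := k)) coact

/-- RHS of the left Yetter–Drinfel'd compatibility condition, sending `h ⊗ x` to
`(h₍₁₎·x)₍₋₁₎ h₍₂₎ ⊗ (h₍₁₎·x)₍₀₎`. -/
def ydR (act : A ⊗[k] X →ₗ[k] X) (coact : X →ₗ[k] A ⊗[k] X) :
    A ⊗[k] X →ₗ[k] A ⊗[k] X :=
  TensorProduct.map (LinearMap.mul' k A) LinearMap.id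
    ∘ₗ (TensorProduct.assoc k A A X).symm.toLinearMap
    ∘ₗ LinearMap.lTensor A (TensorProduct.comm k X A).toLinearMap
    ∘ₗ (TensorProduct.assoc k A X A).toLinearMap
    ∘ₗ LinearMap.rTensor A coact
    ∘ₗ LinearMap.rTensor A act
    ∘ₗ (TensorProduct.assoc k A X A).symm.toLinearMap
    ∘ₗ LinearMap.lTensor A (TensorProduct.comm k A X).toLinearMap
    ∘ₗ (TensorProduct.assoc k A A X).toLinearMap
    ∘ₗ LinearMap.rTensor X (Coalgebra.comul (R := k))

/-- A left Yetter–Drinfel'd module structure over the Hopf algebra `A` on the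
vector space `X`: a left action, a left coaction, and the compatibility. -/
structure IsYD (act : A ⊗[k] X →ₗ[k] X) (coact : X →ₗ[k] A ⊗[k] X) : Prop where
  act_one : ∀ x : X, act (1 ⊗ₜ[k] x) = x
  act_mul : ∀ (a a' : A) (x : X),
    act ((a * a') ⊗ₜ[k] x) = act (a ⊗ₜ[k] act (a' ⊗ₜ[k] x))
  coassoc : (TensorProduct.assoc k A A X).toLinearMap
      ∘ₗ LinearMap.rTensor X (Coalgebra.comul (R := k)) ∘ₗ coact
      = LinearMap.lTensor A coact ∘ₗ coact
  counit_coact : (TensorProduct.lid k X).toLinearMap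
      ∘ₗ LinearMap.rTensor X (Coalgebra.counit (R := k)) ∘ₗ coact = LinearMap.id
  yd : ydL act coact = ydR act coact

/-- The diagonal action `h · (x ⊗ y) = h₍₁₎·x ⊗ h₍₂₎·y` on a tensor product. -/
def tAct (actX : A ⊗[k] X →ₗ[k] X) (actY : A ⊗[k] Y →ₗ[k] Y) :
    A ⊗[k] (X ⊗[k] Y) →ₗ[k] X ⊗[k] Y :=
  TensorProduct.map actX actY
    ∘ₗ (TensorProduct.tensorTensorTensorComm k A A X Y).toLinearMap
    ∘ₗ LinearMap.rTensor (X ⊗[k] Y) (Coalgebra.comul (R := k))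

/-- The codiagonal coaction `x ⊗ y ↦ x₍₋₁₎y₍₋₁₎ ⊗ (x₍₀₎ ⊗ y₍₀₎)` on a tensor product. -/
def tCoact (coactX : X →ₗ[k] A ⊗[k] X) (coactY : Y →ₗ[k] A ⊗[k] Y) :
    X ⊗[k] Y →ₗ[k] A ⊗[k] (X ⊗[k] Y) :=
  LinearMap.rTensor (X ⊗[k] Y) (LinearMap.mul' k A)
    ∘ₗ (TensorProduct.tensorTensorTensorComm k A X A Y).toLinearMap
    ∘ₗ TensorProduct.map coactX coactY

/-- The Yetter–Drinfel'd braiding `c_{X,Y} : x ⊗ y ↦ x₍₋₁₎ · y ⊗ x₍₀₎`. -/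
def ydBraid (coactX : X →ₗ[k] A ⊗[k] X) (actY : A ⊗[k] Y →ₗ[k] Y) :
    X ⊗[k] Y →ₗ[k] Y ⊗[k] X :=
  LinearMap.rTensor X actY
    ∘ₗ (TensorProduct.assoc k A Y X).symm.toLinearMap
    ∘ₗ LinearMap.lTensor A (TensorProduct.comm k X Y).toLinearMap
    ∘ₗ (TensorProduct.assoc k A X Y).toLinearMap
    ∘ₗ LinearMap.rTensor Y coactX

/-- The map `θ_X : x ↦ S(x₍₋₁₎) · x₍₀₎`. -/
def ydTheta (act : A ⊗[k] X →ₗ[k] X) (coact : X →ₗ[k] A ⊗[k] X) : X →ₗ[k] X :=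
  act ∘ₗ LinearMap.rTensor X (HopfAlgebra.antipode (R := k)) ∘ₗ coact

section Pairing

variable {B : Type*} [Ring B] [HopfAlgebra k B]

/-- A Hopf pairing between the Hopf algebras `A` and `B` over the field `k`. -/
structure IsHopfPairing (ω : A →ₗ[k] B →ₗ[k] k) : Prop where
  mul_left : ∀ (a a' : A) (b : B),
    ω (a * a') b =
      (LinearMap.mul' k k ∘ₗ TensorProduct.map (ω a') (ω a)) (Coalgebra.comul (R := k) b)
  one_left : ∀ b : B, ω 1 b = Coalgebra.counit (R := k) b
  mul_right : ∀ (a : A) (b b' : B),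
    ω a (b * b') =
      (LinearMap.mul' k k ∘ₗ TensorProduct.map (ω.flip b') (ω.flip b)) (Coalgebra.comul (R := k) a)
  one_right : ∀ a : A, ω a 1 = Coalgebra.counit (R := k) a

/-- Non-degeneracy of a pairing, witnessed by an inverse copairing `Σᵢ bᵢ ⊗ aᵢ`. -/
def IsInverseCopairing (ω : A →ₗ[k] B →ₗ[k] k) {n : ℕ} (b : Fin n → B) (a : Fin n → A) :
    Prop :=
  (∀ x : A, ∑ i, ω x (b i) • a i = x) ∧ (∀ y : B, ∑ i, ω (a i) y • b i = y)

/-- The left `B`-action `b · x := ω(x₍₋₁₎, S_B⁻²(b)) x₍₀₎` of the functor `Ω`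
(with `SB'` a linear inverse of the antipode of `B`). -/
def omegaAct (ω : A →ₗ[k] B →ₗ[k] k) (SB' : B →ₗ[k] B) (coact : X →ₗ[k] A ⊗[k] X) :
    B ⊗[k] X →ₗ[k] X :=
  (TensorProduct.lid k X).toLinearMap
    ∘ₗ LinearMap.rTensor X (TensorProduct.lift ω)
    ∘ₗ LinearMap.rTensor X (TensorProduct.comm k B A).toLinearMap
    ∘ₗ (TensorProduct.assoc k B A X).symm.toLinearMap
    ∘ₗ LinearMap.lTensor B coact
    ∘ₗ LinearMap.rTensor X (SB' ∘ₗ SB')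

/-- The left `B`-coaction `x ↦ Σᵢ S_B²(bᵢ) ⊗ (aᵢ · x)` of the functor `Ω`. -/
def omegaCoact {n : ℕ} (b : Fin n → B) (a : Fin n → A) (act : A ⊗[k] X →ₗ[k] X) :
    X →ₗ[k] B ⊗[k] X :=
  ∑ i, (TensorProduct.mk k B X
      (HopfAlgebra.antipode (R := k) (HopfAlgebra.antipode (R := k) (b i))))
    ∘ₗ act ∘ₗ TensorProduct.mk k A X (a i)

/-- The monoidal structure `Ω₂ : x ⊗ y ↦ (y₍₋₁₎ · x) ⊗ y₍₀₎` of the functor `Ω`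
(expressed through the `A`-structures). -/
def omega2 (actX : A ⊗[k] X →ₗ[k] X) (coactY : Y →ₗ[k] A ⊗[k] Y) :
    X ⊗[k] Y →ₗ[k] X ⊗[k] Y :=
  LinearMap.rTensor Y actX
    ∘ₗ LinearMap.rTensor Y (TensorProduct.comm k X A).toLinearMap
    ∘ₗ (TensorProduct.assoc k X A Y).symm.toLinearMap
    ∘ₗ LinearMap.lTensor X coactY

/-!
The map `Ω₂` is the flip followed by the Yetter–Drinfel'd braiding `y ⊗ x ↦ y₍₋₁₎ · x ⊗ y₍₀₎` of
`A`, which is an `A`-linear and `A`-colinear bijection `Y ⊗ X → X ⊗ Y`.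

The twisted pairing `η(h, c) = ω(h, S_B⁻²(c))` is again a Hopf pairing, since
`ω(h, S_B⁻¹(c)) = ω(S_A⁻¹(h), c)`, and `Σᵢ S_B²(bᵢ) ⊗ aᵢ` is its inverse copairing. Thus `Ω(X)` is
the `η`-dual of `X`: each action is the contraction of the coaction on the other side. Dualizing
exchanges the module axioms with the comodule axioms and the two sides of the Yetter–Drinfel'd
condition. It also turns the codiagonal coaction over one Hopf algebra into the diagonal action over
the other, with the tensor factors flipped; `B`-linearity and `B`-colinearity of `Ω₂` are thereby
the colinearity and linearity of the braiding over `A`.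
-/

open Coalgebra

section Contraction

variable {R M N P : Type*} [CommSemiring R] [AddCommMonoid M] [Module R M]
  [AddCommMonoid N] [Module R N] [AddCommMonoid P] [Module R P]

/-- The contraction `m ⊗ x ↦ f m • x` of the first tensor factor with a functional `f`. -/
def contract (f : M →ₗ[R] R) : M ⊗[R] N →ₗ[R] N :=
  (TensorProduct.lid R N).toLinearMap ∘ₗ LinearMap.rTensor N f

@[simp]
lemma contract_tmul (f : M →ₗ[R] R) (m : M) (x : N) : contract f (m ⊗ₜ[R] x) = f m • x := by
  simp [contract]

lemma contract_lTensor (f : M →ₗ[R] R) (g : N →ₗ[R] P) (t : M ⊗[R] N) :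
    contract f (LinearMap.lTensor M g t) = g (contract f t) := by
  induction t with
  | zero => simp
  | tmul m x => simp
  | add s t hs ht => simp only [map_add, hs, ht]

end Contraction

/-- A two-sided compositional inverse of the antipode. -/
def IsInverseAntipode {R H : Type*} [CommSemiring R] [Semiring H] [HopfAlgebra R H]
    (S' : H →ₗ[R] H) : Prop :=
  S' ∘ₗ HopfAlgebra.antipode R = LinearMap.id ∧ HopfAlgebra.antipode R ∘ₗ S' = LinearMap.id

namespace IsInverseAntipode

variable {R H : Type*} [CommSemiring R] [Semiring H] [HopfAlgebra R H] {S' : H →ₗ[R] H}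

lemma apply_antipode (hS : IsInverseAntipode S') (a : H) : S' (HopfAlgebra.antipode R a) = a :=
  LinearMap.congr_fun hS.1 a

lemma antipode_apply (hS : IsInverseAntipode S') (a : H) : HopfAlgebra.antipode R (S' a) = a :=
  LinearMap.congr_fun hS.2 a

protected lemma map_one (hS : IsInverseAntipode S') : S' 1 = 1 := by
  simpa using hS.apply_antipode 1

protected lemma map_mul (hS : IsInverseAntipode S') (a a' : H) : S' (a * a') = S' a' * S' a := by
  rw [← hS.apply_antipode (S' a' * S' a), HopfAlgebra.antipode_mul_antidistrib,
    hS.antipode_apply, hS.antipode_apply]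

lemma map_algebraMap (hS : IsInverseAntipode S') (c : R) :
    S' (algebraMap R H c) = algebraMap R H c := by
  rw [Algebra.algebraMap_eq_smul_one, map_smul, hS.map_one]

lemma sum_apply_right_mul_left (hS : IsInverseAntipode S') {ι : Type*} {a : H}
    (r : Repr R a ι) :
    ∑ i ∈ r.index, S' (r.right i) * r.left i = algebraMap R H (counit a) := by
  simpa [hS.map_mul, hS.apply_antipode, hS.map_algebraMap] using
    congrArg S' (HopfAlgebra.sum_antipode_mul_eq_algebraMap_counit r)

lemma sum_right_mul_apply_left (hS : IsInverseAntipode S') {ι : Type*} {a : H}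
    (r : Repr R a ι) :
    ∑ i ∈ r.index, r.right i * S' (r.left i) = algebraMap R H (counit a) := by
  simpa [hS.map_mul, hS.apply_antipode, hS.map_algebraMap] using
    congrArg S' (HopfAlgebra.sum_mul_antipode_eq_algebraMap_counit r)

/-- The square `S⁻²` of the inverse antipode, as an algebra endomorphism. -/
def sq (hS : IsInverseAntipode S') : H →ₐ[R] H :=
  AlgHom.ofLinearMap (S' ∘ₗ S') (by simp [hS.map_one]) (by simp [hS.map_mul])

end IsInverseAntipode

section YetterDrinfeld

variable {actX : A ⊗[k] X →ₗ[k] X} {coactX : X →ₗ[k] A ⊗[k] X}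
  {actY : A ⊗[k] Y →ₗ[k] Y} {coactY : Y →ₗ[k] A ⊗[k] Y}

lemma ydL_tmul (act : A ⊗[k] X →ₗ[k] X) (coact : X →ₗ[k] A ⊗[k] X) {ι : Type*} {h : A}
    (r : Repr k h ι) (x : X) :
    ydL act coact (h ⊗ₜ[k] x) = ∑ i ∈ r.index,
      TensorProduct.map (LinearMap.mulLeft k (r.left i)) (curry act (r.right i)) (coact x) := by
  simp only [ydL, LinearMap.comp_apply, map_tmul, ← r.eq]
  induction coact x with
  | zero => simp
  | tmul m x => simp [sum_tmul]
  | add s t hs ht =>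
    simp only [map_add, tmul_add, hs, ht, Finset.sum_add_distrib]

lemma ydR_tmul (act : A ⊗[k] X →ₗ[k] X) (coact : X →ₗ[k] A ⊗[k] X) {ι : Type*} {h : A}
    (r : Repr k h ι) (x : X) :
    ydR act coact (h ⊗ₜ[k] x) = ∑ i ∈ r.index,
      LinearMap.rTensor X (LinearMap.mulRight k (r.right i)) (coact (act (r.left i ⊗ₜ[k] x))) := by
  simp only [ydR, LinearMap.comp_apply, LinearMap.rTensor_tmul, ← r.eq, sum_tmul,
    map_sum, LinearEquiv.coe_coe, assoc_tmul, LinearMap.lTensor_tmul,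
    comm_tmul, assoc_symm_tmul]
  refine Finset.sum_congr rfl fun i _ => ?_
  induction coact (act (r.left i ⊗ₜ[k] x)) with
  | zero => simp
  | tmul m x => simp
  | add s t hs ht => simp only [map_add, add_tmul, hs, ht]

lemma tAct_tmul (actX : A ⊗[k] X →ₗ[k] X) (actY : A ⊗[k] Y →ₗ[k] Y) {ι : Type*} {h : A}
    (r : Repr k h ι) (x : X) (y : Y) :
    tAct actX actY (h ⊗ₜ[k] (x ⊗ₜ[k] y)) =
      ∑ i ∈ r.index, actX (r.left i ⊗ₜ[k] x) ⊗ₜ[k] actY (r.right i ⊗ₜ[k] y) := by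
  simp [tAct, ← r.eq, sum_tmul]

lemma ydBraid_tmul (coactX : X →ₗ[k] A ⊗[k] X) (actY : A ⊗[k] Y →ₗ[k] Y) (x : X) (y : Y) :
    ydBraid coactX actY (x ⊗ₜ[k] y) = LinearMap.rTensor X ((curry actY).flip y) (coactX x) := by
  simp only [ydBraid, LinearMap.comp_apply, LinearMap.rTensor_tmul]
  induction coactX x with
  | zero => simp
  | tmul m x => simp
  | add s t hs ht => simp only [map_add, add_tmul, hs, ht]

lemma omega2_eq_ydBraid_comp_comm (actX : A ⊗[k] X →ₗ[k] X) (coactY : Y →ₗ[k] A ⊗[k] Y) :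
    omega2 actX coactY = ydBraid coactY actX ∘ₗ (TensorProduct.comm k X Y).toLinearMap := by
  refine TensorProduct.ext' fun x y => ?_
  simp only [omega2, LinearMap.comp_apply, LinearMap.lTensor_tmul, LinearEquiv.coe_coe,
    comm_tmul, ydBraid_tmul]
  induction coactY y with
  | zero => simp
  | tmul m y => simp
  | add s t hs ht => simp only [map_add, tmul_add, hs, ht]

lemma omega2_tmul (actX : A ⊗[k] X →ₗ[k] X) (coactY : Y →ₗ[k] A ⊗[k] Y) (x : X) (y : Y) :
    omega2 actX coactY (x ⊗ₜ[k] y) = ydBraid coactY actX (y ⊗ₜ[k] x) :=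
  LinearMap.congr_fun (omega2_eq_ydBraid_comp_comm actX coactY) (x ⊗ₜ[k] y)

lemma ydBraid_tAct_tmul (hmulY : ∀ (a a' : A) (y : Y),
      actY ((a * a') ⊗ₜ[k] y) = actY (a ⊗ₜ[k] actY (a' ⊗ₜ[k] y))) (h : A) (x : X) (y : Y) :
    ydBraid coactX actY (tAct actX actY (h ⊗ₜ[k] (x ⊗ₜ[k] y))) =
      LinearMap.rTensor X ((curry actY).flip y) (ydR actX coactX (h ⊗ₜ[k] x)) := by
  rw [tAct_tmul _ _ (ℛ k h), ydR_tmul _ _ (ℛ k h), map_sum, map_sum]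
  refine Finset.sum_congr rfl fun i _ => ?_
  have hcomp : (curry actY).flip (actY ((ℛ k h).right i ⊗ₜ[k] y)) =
      (curry actY).flip y ∘ₗ LinearMap.mulRight k ((ℛ k h).right i) := by
    ext a
    simp [hmulY]
  rw [ydBraid_tmul, hcomp, LinearMap.rTensor_comp_apply]

lemma tAct_ydBraid_tmul (hmulY : ∀ (a a' : A) (y : Y),
      actY ((a * a') ⊗ₜ[k] y) = actY (a ⊗ₜ[k] actY (a' ⊗ₜ[k] y))) (h : A) (x : X) (y : Y) :
    tAct actY actX (h ⊗ₜ[k] ydBraid coactX actY (x ⊗ₜ[k] y)) =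
      LinearMap.rTensor X ((curry actY).flip y) (ydL actX coactX (h ⊗ₜ[k] x)) := by
  rw [ydBraid_tmul, ydL_tmul _ _ (ℛ k h)]
  induction coactX x with
  | zero => simp
  | tmul a x => simp [tAct_tmul _ _ (ℛ k h), hmulY]
  | add s t hs ht =>
    simp only [map_add, tmul_add, Finset.sum_add_distrib, hs, ht]

theorem ydBraid_comp_tAct (hX : IsYD actX coactX) (hY : IsYD actY coactY) :
    ydBraid coactX actY ∘ₗ tAct actX actY =
      tAct actY actX ∘ₗ LinearMap.lTensor A (ydBraid coactX actY) := by
  ext h x y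
  simp [ydBraid_tAct_tmul hY.act_mul, tAct_ydBraid_tmul hY.act_mul, hX.yd]

lemma tCoact_ydBraid_tmul (hcoassoc : (TensorProduct.assoc k A A X).toLinearMap
      ∘ₗ LinearMap.rTensor X comul ∘ₗ coactX = LinearMap.lTensor A coactX ∘ₗ coactX)
    (x : X) (y : Y) :
    tCoact coactY coactX (ydBraid coactX actY (x ⊗ₜ[k] y)) =
      TensorProduct.assoc k A Y X
        (LinearMap.rTensor X ((curry (ydR actY coactY)).flip y) (coactX x)) := by
  let f : A ⊗[k] (A ⊗[k] X) →ₗ[k] A ⊗[k] (Y ⊗[k] X) :=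
    LinearMap.rTensor (Y ⊗[k] X) (LinearMap.mul' k A)
      ∘ₗ (TensorProduct.tensorTensorTensorComm k A Y A X).toLinearMap
      ∘ₗ LinearMap.rTensor (A ⊗[k] X) (coactY ∘ₗ (curry actY).flip y)
  have hf (h h' : A) (x : X) : f (h ⊗ₜ[k] (h' ⊗ₜ[k] x)) = TensorProduct.assoc k A Y X
      (LinearMap.rTensor Y (LinearMap.mulRight k h') (coactY (actY (h ⊗ₜ[k] y))) ⊗ₜ[k] x) := by
    simp only [f, LinearMap.comp_apply, LinearMap.rTensor_tmul, LinearMap.flip_apply, curry_apply]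
    induction coactY (actY (h ⊗ₜ[k] y)) with
    | zero => simp
    | tmul a y => simp
    | add s t hs ht => simp only [map_add, add_tmul, hs, ht]
  calc tCoact coactY coactX (ydBraid coactX actY (x ⊗ₜ[k] y))
      = f (LinearMap.lTensor A coactX (coactX x)) := by
        rw [ydBraid_tmul, tCoact]
        induction coactX x with
        | zero => simp
        | tmul a x => simp [f]
        | add s t hs ht => simp only [map_add, hs, ht]
    _ = f (TensorProduct.assoc k A A X (LinearMap.rTensor X comul (coactX x))) :=
        congrArg f (LinearMap.congr_fun hcoassoc x).symm
    _ = _ := by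
        induction coactX x with
        | zero => simp
        | tmul a x => simp [← (ℛ k a).eq, sum_tmul, hf, ydR_tmul _ _ (ℛ k a)]
        | add s t hs ht => simp only [map_add, hs, ht]

lemma lTensor_ydBraid_tCoact_tmul (hcoassoc : (TensorProduct.assoc k A A X).toLinearMap
      ∘ₗ LinearMap.rTensor X comul ∘ₗ coactX = LinearMap.lTensor A coactX ∘ₗ coactX)
    (x : X) (y : Y) :
    LinearMap.lTensor A (ydBraid coactX actY) (tCoact coactX coactY (x ⊗ₜ[k] y)) =
      TensorProduct.assoc k A Y X
        (LinearMap.rTensor X ((curry (ydL actY coactY)).flip y) (coactX x)) := by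
  let f (u : A ⊗[k] Y) : A →ₗ[k] A ⊗[k] Y :=
    TensorProduct.map (LinearMap.mul' k A) actY
      ∘ₗ (TensorProduct.tensorTensorTensorComm k A A A Y).toLinearMap
      ∘ₗ (TensorProduct.mk k (A ⊗[k] A) (A ⊗[k] Y)).flip u ∘ₗ comul
  suffices h : ∀ u : A ⊗[k] Y,
      LinearMap.lTensor A (ydBraid coactX actY)
          (LinearMap.rTensor (X ⊗[k] Y) (LinearMap.mul' k A)
            (TensorProduct.tensorTensorTensorComm k A X A Y (coactX x ⊗ₜ[k] u))) =
        TensorProduct.assoc k A Y X (LinearMap.rTensor X (f u) (coactX x)) from h (coactY y)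
  intro u
  induction u with
  | zero => simp [f]
  | add s t hs ht =>
    have hf : f (s + t) = f s + f t := by ext; simp [f]
    simp only [tmul_add, map_add, hs, ht, hf, LinearMap.rTensor_add, LinearMap.add_apply]
  | tmul a y =>
    let g : A ⊗[k] (A ⊗[k] X) →ₗ[k] A ⊗[k] (Y ⊗[k] X) :=
      TensorProduct.map (LinearMap.mulRight k a) (LinearMap.rTensor X ((curry actY).flip y))
    calc _ = g (LinearMap.lTensor A coactX (coactX x)) := by
          induction coactX x with
          | zero => simp
          | tmul h x => simp [g, ydBraid_tmul]
          | add s t hs ht => simp only [map_add, add_tmul, hs, ht]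
      _ = g (TensorProduct.assoc k A A X (LinearMap.rTensor X comul (coactX x))) :=
          congrArg g (LinearMap.congr_fun hcoassoc x).symm
      _ = _ := by
          induction coactX x with
          | zero => simp
          | tmul h x => simp [f, g, ← (ℛ k h).eq, sum_tmul]
          | add s t hs ht => simp only [map_add, hs, ht]

theorem lTensor_ydBraid_comp_tCoact (hX : IsYD actX coactX) (hY : IsYD actY coactY) :
    LinearMap.lTensor A (ydBraid coactX actY) ∘ₗ tCoact coactX coactY =
      tCoact coactY coactX ∘ₗ ydBraid coactX actY := by
  refine TensorProduct.ext' fun x y => ?_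
  simp only [LinearMap.comp_apply, lTensor_ydBraid_tCoact_tmul hX.coassoc,
    tCoact_ydBraid_tmul hX.coassoc, hY.yd]

lemma ydBraid_comm_ydBraid_tmul {act₁ act₂ : A ⊗[k] Y →ₗ[k] Y}
    (hcoassoc : (TensorProduct.assoc k A A X).toLinearMap
      ∘ₗ LinearMap.rTensor X comul ∘ₗ coactX = LinearMap.lTensor A coactX ∘ₗ coactX)
    (hcounit : (TensorProduct.lid k X).toLinearMap
      ∘ₗ LinearMap.rTensor X counit ∘ₗ coactX = LinearMap.id)
    (hact : ∀ (h : A) (y : Y), ∑ i ∈ (ℛ k h).index,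
      act₁ ((ℛ k h).right i ⊗ₜ[k] act₂ ((ℛ k h).left i ⊗ₜ[k] y)) = counit (R := k) h • y)
    (x : X) (y : Y) :
    ydBraid coactX act₁ (TensorProduct.comm k Y X (ydBraid coactX act₂ (x ⊗ₜ[k] y))) =
      y ⊗ₜ[k] x := by
  let f : A ⊗[k] (A ⊗[k] X) →ₗ[k] Y ⊗[k] X :=
    LinearMap.rTensor X (act₁ ∘ₗ LinearMap.lTensor A ((curry act₂).flip y)
        ∘ₗ (TensorProduct.comm k A A).toLinearMap)
      ∘ₗ (TensorProduct.assoc k A A X).symm.toLinearMap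
  calc ydBraid coactX act₁ (TensorProduct.comm k Y X (ydBraid coactX act₂ (x ⊗ₜ[k] y)))
      = f (LinearMap.lTensor A coactX (coactX x)) := by
        rw [ydBraid_tmul]
        induction coactX x with
        | zero => simp
        | tmul a x =>
          simp only [LinearMap.rTensor_tmul, comm_tmul, ydBraid_tmul,
            LinearMap.lTensor_tmul]
          induction coactX x with
          | zero => simp
          | tmul a' x => simp [f]
          | add s t hs ht => simp only [map_add, tmul_add, hs, ht]
        | add s t hs ht => simp only [map_add, hs, ht]
    _ = f (TensorProduct.assoc k A A X (LinearMap.rTensor X comul (coactX x))) :=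
        congrArg f (LinearMap.congr_fun hcoassoc x).symm
    _ = y ⊗ₜ[k] TensorProduct.lid k X (LinearMap.rTensor X counit (coactX x)) := by
        induction coactX x with
        | zero => simp
        | tmul a x =>
          simp [f, ← (ℛ k a).eq, sum_tmul, smul_tmul', ← hact]
        | add s t hs ht => simp only [map_add, tmul_add, hs, ht]
    _ = y ⊗ₜ[k] x := congrArg (y ⊗ₜ[k] ·) (LinearMap.congr_fun hcounit x)

theorem ydBraid_bijective (hX : IsYD actX coactX) (hY : IsYD actY coactY) {S' : A →ₗ[k] A}
    (hS : IsInverseAntipode S') : Function.Bijective (ydBraid coactX actY) := by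
  -- The inverse is `y ⊗ x ↦ x₍₀₎ ⊗ S⁻¹(x₍₋₁₎) · y`.
  let actY' := actY ∘ₗ LinearMap.rTensor Y S'
  let inv := (TensorProduct.comm k Y X).toLinearMap ∘ₗ ydBraid coactX actY'
    ∘ₗ (TensorProduct.comm k Y X).toLinearMap
  have hright (h : A) (y : Y) : ∑ i ∈ (ℛ k h).index,
      actY ((ℛ k h).right i ⊗ₜ[k] actY' ((ℛ k h).left i ⊗ₜ[k] y)) = counit (R := k) h • y := by
    simp [actY', ← hY.act_mul, ← map_sum, ← sum_tmul, hS.sum_right_mul_apply_left,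
      Algebra.algebraMap_eq_smul_one, ← smul_tmul', hY.act_one]
  have hleft (h : A) (y : Y) : ∑ i ∈ (ℛ k h).index,
      actY' ((ℛ k h).right i ⊗ₜ[k] actY ((ℛ k h).left i ⊗ₜ[k] y)) = counit (R := k) h • y := by
    simp [actY', ← hY.act_mul, ← map_sum, ← sum_tmul, hS.sum_apply_right_mul_left,
      Algebra.algebraMap_eq_smul_one, ← smul_tmul', hY.act_one]
  have hinv_left : inv ∘ₗ ydBraid coactX actY = LinearMap.id := by
    refine TensorProduct.ext' fun x y => ?_
    simp [inv, ydBraid_comm_ydBraid_tmul hX.coassoc hX.counit_coact hleft]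
  have hinv_right : ydBraid coactX actY ∘ₗ inv = LinearMap.id := by
    refine TensorProduct.ext' fun y x => ?_
    simp [inv, ydBraid_comm_ydBraid_tmul hX.coassoc hX.counit_coact hright]
  exact Function.bijective_iff_has_inverse.mpr
    ⟨inv, LinearMap.congr_fun hinv_left, LinearMap.congr_fun hinv_right⟩

end YetterDrinfeld

section HopfPairing

variable {η : A →ₗ[k] B →ₗ[k] k}

namespace IsHopfPairing

protected lemma flip (hη : IsHopfPairing η) : IsHopfPairing η.flip :=
  ⟨fun c c' h => hη.mul_right h c c', hη.one_right, fun c h h' => hη.mul_left h h' c, hη.one_left⟩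

lemma apply_mul (hη : IsHopfPairing η) {ι : Type*} {h : A} (r : Repr k h ι) (c c' : B) :
    η h (c * c') = ∑ i ∈ r.index, η (r.left i) c' * η (r.right i) c := by
  simp [hη.mul_right, ← r.eq]

lemma mul_apply (hη : IsHopfPairing η) {ι : Type*} (h h' : A) {c : B} (r : Repr k c ι) :
    η (h * h') c = ∑ i ∈ r.index, η h' (r.left i) * η h (r.right i) :=
  hη.flip.apply_mul r h h'

lemma contract_map_mulLeft (hη : IsHopfPairing η) {ι : Type*} {h : A} (r : Repr k h ι) (c : B)
    (g : X →ₗ[k] Y) (t : B ⊗[k] X) :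
    contract (η h) (TensorProduct.map (LinearMap.mulLeft k c) g t) =
      ∑ i ∈ r.index, η (r.right i) c • g (contract (η (r.left i)) t) := by
  induction t with
  | zero => simp
  | tmul m x => simp [hη.apply_mul r, Finset.sum_smul, smul_smul, mul_comm]
  | add s t hs ht => simp only [map_add, smul_add, Finset.sum_add_distrib, hs, ht]

lemma contract_rTensor_mulRight (hη : IsHopfPairing η) {ι : Type*} {h : A} (r : Repr k h ι)
    (c : B) (t : B ⊗[k] X) :
    contract (η h) (LinearMap.rTensor X (LinearMap.mulRight k c) t) =
      ∑ i ∈ r.index, η (r.left i) c • contract (η (r.right i)) t := by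
  induction t with
  | zero => simp
  | tmul m x => simp [hη.apply_mul r, Finset.sum_smul, smul_smul]
  | add s t hs ht => simp only [map_add, smul_add, Finset.sum_add_distrib, hs, ht]

lemma contract_contract_comul (hη : IsHopfPairing η) (h h' : A) (t : B ⊗[k] X) :
    contract (η h) (contract (η h') (TensorProduct.assoc k B B X (LinearMap.rTensor X comul t))) =
      contract (η (h * h')) t := by
  induction t with
  | zero => simp
  | tmul c x => simp [← (ℛ k c).eq, sum_tmul, hη.mul_left, Finset.sum_smul, smul_smul]
  | add s t hs ht => simp only [map_add, hs, ht]

lemma contract_one (hη : IsHopfPairing η) (t : B ⊗[k] X) :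
    contract (η 1) t = TensorProduct.lid k X (LinearMap.rTensor X counit t) := by
  rw [show η 1 = counit from LinearMap.ext hη.one_left]
  rfl

lemma compl₂ (hη : IsHopfPairing η) {f : B →ₐ[k] B} {g : A →ₐ[k] A}
    (hfg : ∀ h c, η (g h) c = η h (f c)) : IsHopfPairing (η.compl₂ f.toLinearMap) where
  mul_left h h' c := by
    have hcomp (h : A) : η.compl₂ f.toLinearMap h = η (g h) := by ext c; simp [hfg]
    simp only [hcomp, map_mul, hη.mul_left]
  one_left c := by simp [← hfg, hη.one_left]
  mul_right h c c' := by
    simp [hη.apply_mul (ℛ k h), ← (ℛ k h).eq]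
  one_right h := by simp [hη.one_right]

/-- Both sides, as functionals on `A ⊗ B`, are convolution inverses of `η`. -/
theorem apply_inverseAntipode (hη : IsHopfPairing η) {SA' : A →ₗ[k] A} {SB' : B →ₗ[k] B}
    (hSA : IsInverseAntipode SA') (hSB : IsInverseAntipode SB') (h : A) (c : B) :
    η (SA' h) c = η h (SB' c) := by
  let conv (ζ : A →ₗ[k] B →ₗ[k] k) : WithConv (A ⊗[k] B →ₗ[k] k) := WithConv.toConv (lift ζ)
  have hleft : conv (η ∘ₗ SA') * conv η = 1 := by
    ext h c
    calc (conv (η ∘ₗ SA') * conv η).ofConv (h ⊗ₜ c)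
        = ∑ i ∈ (ℛ k h).index, η ((ℛ k h).right i * SA' ((ℛ k h).left i)) c := by
          simp [((ℛ k h).tmul (ℛ k c)).convMul_apply, conv, hη.mul_apply _ _ (ℛ k c),
            Finset.sum_product]
      _ = counit (R := k) c * counit (R := k) h := by
          simp [← LinearMap.sum_apply, ← map_sum, hSA.sum_right_mul_apply_left,
            Algebra.algebraMap_eq_smul_one, hη.one_left, mul_comm]
      _ = _ := by simp
  have hright : conv η * conv (η.compl₂ SB') = 1 := by
    ext h c
    calc (conv η * conv (η.compl₂ SB')).ofConv (h ⊗ₜ c)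
        = ∑ j ∈ (ℛ k c).index, η h (SB' ((ℛ k c).right j) * (ℛ k c).left j) := by
          simp [((ℛ k h).tmul (ℛ k c)).convMul_apply, conv, hη.apply_mul (ℛ k h),
            Finset.sum_product_right]
      _ = counit (R := k) c * counit (R := k) h := by
          simp [← map_sum, hSB.sum_apply_right_mul_left,
            Algebra.algebraMap_eq_smul_one, hη.one_right]
      _ = _ := by simp
  exact congrArg (fun f => f.ofConv (h ⊗ₜ[k] c)) (left_inv_eq_right_inv hleft hright)

end IsHopfPairing

namespace IsInverseCopairing

variable {n : ℕ} {b : Fin n → B} {a : Fin n → A}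

lemma compl₂ (hcop : IsInverseCopairing η b a) {f g : B →ₗ[k] B} (hfg : f ∘ₗ g = LinearMap.id)
    (hgf : g ∘ₗ f = LinearMap.id) : IsInverseCopairing (η.compl₂ f) (g ∘ b) a := by
  have hfg' (c : B) : f (g c) = c := LinearMap.congr_fun hfg c
  have hgf' (c : B) : g (f c) = c := LinearMap.congr_fun hgf c
  refine ⟨fun h => by simpa [hfg'] using hcop.1 h, fun c => ?_⟩
  simpa [hgf'] using congrArg g (hcop.2 (f c))

lemma sum_tmul_contract (hcop : IsInverseCopairing η b a) (t : B ⊗[k] X) :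
    ∑ i, b i ⊗ₜ[k] contract (η (a i)) t = t := by
  induction t with
  | zero => simp
  | tmul c x =>
    simp_rw [contract_tmul, ← smul_tmul, ← sum_tmul, hcop.2]
  | add s t hs ht => simp only [map_add, tmul_add, Finset.sum_add_distrib, hs, ht]

lemma ext_contract (hcop : IsInverseCopairing η b a) {s t : B ⊗[k] X}
    (h : ∀ h : A, contract (η h) s = contract (η h) t) : s = t := by
  rw [← hcop.sum_tmul_contract s, ← hcop.sum_tmul_contract t]
  simp only [h]

end IsInverseCopairing

/-- The action `h · x = η(h, x₍₋₁₎) x₍₀₎` of `A` is induced by a coaction of `B`. If `η` is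
non-degenerate, the action determines the coaction as well. -/
def IsInducedAction (η : A →ₗ[k] B →ₗ[k] k) (coact : X →ₗ[k] B ⊗[k] X)
    (act : A ⊗[k] X →ₗ[k] X) : Prop :=
  ∀ h x, act (h ⊗ₜ[k] x) = contract (η h) (coact x)

namespace IsInducedAction

variable {coact : X →ₗ[k] B ⊗[k] X} {act : A ⊗[k] X →ₗ[k] X}

lemma act_one (hact : IsInducedAction η coact act) (hη : IsHopfPairing η)
    (hcounit : (TensorProduct.lid k X).toLinearMap ∘ₗ LinearMap.rTensor X counit ∘ₗ coact =
      LinearMap.id) (x : X) : act (1 ⊗ₜ[k] x) = x := by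
  rw [hact, hη.contract_one]
  exact LinearMap.congr_fun hcounit x

lemma act_mul (hact : IsInducedAction η coact act) (hη : IsHopfPairing η)
    (hcoassoc : (TensorProduct.assoc k B B X).toLinearMap ∘ₗ LinearMap.rTensor X comul ∘ₗ coact =
      LinearMap.lTensor B coact ∘ₗ coact) (h h' : A) (x : X) :
    act ((h * h') ⊗ₜ[k] x) = act (h ⊗ₜ[k] act (h' ⊗ₜ[k] x)) :=
  calc act ((h * h') ⊗ₜ[k] x)
      = contract (η h) (contract (η h')
          (TensorProduct.assoc k B B X (LinearMap.rTensor X comul (coact x)))) := by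
        rw [hact, hη.contract_contract_comul]
    _ = contract (η h) (contract (η h') (LinearMap.lTensor B coact (coact x))) :=
        congrArg (fun t => contract (η h) (contract (η h') t)) (LinearMap.congr_fun hcoassoc x)
    _ = act (h ⊗ₜ[k] act (h' ⊗ₜ[k] x)) := by rw [contract_lTensor, hact, hact]

lemma counit_coact (hact : IsInducedAction η coact act) (hη : IsHopfPairing η)
    (hone : ∀ x : X, act (1 ⊗ₜ[k] x) = x) :
    (TensorProduct.lid k X).toLinearMap ∘ₗ LinearMap.rTensor X counit ∘ₗ coact = LinearMap.id := by
  ext x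
  exact (hη.contract_one (coact x)).symm.trans ((hact 1 x).symm.trans (hone x))

lemma coassoc (hact : IsInducedAction η coact act) (hη : IsHopfPairing η)
    {n : ℕ} {b : Fin n → B} {a : Fin n → A} (hcop : IsInverseCopairing η b a)
    (hmul : ∀ (h h' : A) (x : X),
      act ((h * h') ⊗ₜ[k] x) = act (h ⊗ₜ[k] act (h' ⊗ₜ[k] x))) :
    (TensorProduct.assoc k B B X).toLinearMap ∘ₗ LinearMap.rTensor X comul ∘ₗ coact =
      LinearMap.lTensor B coact ∘ₗ coact := by
  ext x
  refine hcop.ext_contract fun h' => hcop.ext_contract fun h => ?_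
  calc contract (η h) (contract (η h')
        (TensorProduct.assoc k B B X (LinearMap.rTensor X comul (coact x))))
      = act ((h * h') ⊗ₜ[k] x) := by rw [hact, hη.contract_contract_comul]
    _ = contract (η h) (contract (η h') (LinearMap.lTensor B coact (coact x))) := by
        rw [hmul, contract_lTensor, hact, hact]

lemma contract_ydR (hact : IsInducedAction η coact act) (hη : IsHopfPairing η)
    {coactA : X →ₗ[k] A ⊗[k] X} {actB : B ⊗[k] X →ₗ[k] X}
    (hactB : IsInducedAction η.flip coactA actB) (h : A) (c : B) (x : X) :
    contract (η h) (ydR actB coact (c ⊗ₜ[k] x)) =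
      contract (η.flip c) (ydL act coactA (h ⊗ₜ[k] x)) := by
  rw [ydR_tmul _ _ (ℛ k c), ydL_tmul _ _ (ℛ k h), map_sum, map_sum]
  simp only [hη.contract_rTensor_mulRight (ℛ k h), hη.flip.contract_map_mulLeft (ℛ k c),
    ← hact _ _, ← hactB _ _, curry_apply, LinearMap.flip_apply]
  exact Finset.sum_comm

theorem isYD {coactA : X →ₗ[k] A ⊗[k] X} {actB : B ⊗[k] X →ₗ[k] X}
    (hact : IsInducedAction η coact act) (hactB : IsInducedAction η.flip coactA actB)
    (hη : IsHopfPairing η) {n : ℕ} {b : Fin n → B} {a : Fin n → A}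
    (hcop : IsInverseCopairing η b a) (hX : IsYD act coactA) : IsYD actB coact where
  act_one := hactB.act_one hη.flip hX.counit_coact
  act_mul := hactB.act_mul hη.flip hX.coassoc
  coassoc := hact.coassoc hη hcop hX.act_mul
  counit_coact := hact.counit_coact hη hX.act_one
  yd := by
    refine TensorProduct.ext' fun c x => hcop.ext_contract fun h => ?_
    rw [hact.contract_ydR hη hactB, hX.yd]
    exact (hactB.contract_ydR hη.flip hact c h x).symm

variable {coactY : Y →ₗ[k] B ⊗[k] Y} {actY : A ⊗[k] Y →ₗ[k] Y}

lemma contract_tCoact (hact : IsInducedAction η coact act) (hactY : IsInducedAction η coactY actY)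
    (hη : IsHopfPairing η) (h : A) (x : X) (y : Y) :
    contract (η h) (tCoact coactY coact (y ⊗ₜ[k] x)) =
      TensorProduct.comm k X Y (tAct act actY (h ⊗ₜ[k] (x ⊗ₜ[k] y))) := by
  simp only [tAct_tmul _ _ (ℛ k h), map_sum, comm_tmul, hact _ _, hactY _ _, tCoact,
    LinearMap.comp_apply, map_tmul]
  induction coact x with
  | zero => simp
  | add s t hs ht =>
    simp only [map_add, tmul_add, Finset.sum_add_distrib, hs, ht]
  | tmul c x =>
    induction coactY y with
    | zero => simp
    | tmul c' y =>
      simp [hη.apply_mul (ℛ k h), Finset.sum_smul, smul_tmul', smul_smul]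
    | add s t hs ht =>
      simp only [map_add, add_tmul, Finset.sum_add_distrib, hs, ht]

end IsInducedAction

end HopfPairing

section Omega2

variable {η : A →ₗ[k] B →ₗ[k] k}
  {actX : A ⊗[k] X →ₗ[k] X} {coactX : X →ₗ[k] A ⊗[k] X}
  {actY : A ⊗[k] Y →ₗ[k] Y} {coactY : Y →ₗ[k] A ⊗[k] Y}

theorem omega2_comp_tAct {actBX : B ⊗[k] X →ₗ[k] X} {actBY : B ⊗[k] Y →ₗ[k] Y}
    {actBXY : B ⊗[k] (X ⊗[k] Y) →ₗ[k] X ⊗[k] Y} (hX : IsYD actX coactX) (hY : IsYD actY coactY)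
    (hη : IsHopfPairing η) (hactBX : IsInducedAction η.flip coactX actBX)
    (hactBY : IsInducedAction η.flip coactY actBY)
    (hactBXY : IsInducedAction η.flip (tCoact coactX coactY) actBXY) :
    omega2 actX coactY ∘ₗ tAct actBX actBY =
      actBXY ∘ₗ LinearMap.lTensor B (omega2 actX coactY) := by
  ext c x y
  calc omega2 actX coactY (tAct actBX actBY (c ⊗ₜ[k] (x ⊗ₜ[k] y)))
      = ydBraid coactY actX (contract (η.flip c) (tCoact coactY coactX (y ⊗ₜ[k] x))) := by
        rw [hactBX.contract_tCoact hactBY hη.flip, omega2_eq_ydBraid_comp_comm]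
        rfl
    _ = contract (η.flip c) (tCoact coactX coactY (ydBraid coactY actX (y ⊗ₜ[k] x))) := by
        rw [← contract_lTensor]
        exact congrArg _ (LinearMap.congr_fun (lTensor_ydBraid_comp_tCoact hY hX) (y ⊗ₜ[k] x))
    _ = actBXY (c ⊗ₜ[k] omega2 actX coactY (x ⊗ₜ[k] y)) := by
        rw [hactBXY, omega2_tmul]

theorem lTensor_omega2_comp_tCoact {n : ℕ} {b : Fin n → B} {a : Fin n → A}
    {coactBX : X →ₗ[k] B ⊗[k] X} {coactBY : Y →ₗ[k] B ⊗[k] Y}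
    {coactBXY : X ⊗[k] Y →ₗ[k] B ⊗[k] (X ⊗[k] Y)} (hX : IsYD actX coactX) (hY : IsYD actY coactY)
    (hη : IsHopfPairing η) (hcop : IsInverseCopairing η b a)
    (hactX : IsInducedAction η coactBX actX) (hactY : IsInducedAction η coactBY actY)
    (hactXY : IsInducedAction η coactBXY (tAct actX actY)) :
    coactBXY ∘ₗ omega2 actX coactY =
      LinearMap.lTensor B (omega2 actX coactY) ∘ₗ tCoact coactBX coactBY := by
  refine TensorProduct.ext' fun x y => hcop.ext_contract fun h => ?_
  calc contract (η h) (coactBXY (omega2 actX coactY (x ⊗ₜ[k] y)))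
      = tAct actX actY (h ⊗ₜ[k] ydBraid coactY actX (y ⊗ₜ[k] x)) := by
        rw [← hactXY, omega2_tmul]
    _ = ydBraid coactY actX (tAct actY actX (h ⊗ₜ[k] (y ⊗ₜ[k] x))) :=
        (LinearMap.congr_fun (ydBraid_comp_tAct hY hX) (h ⊗ₜ[k] (y ⊗ₜ[k] x))).symm
    _ = omega2 actX coactY (contract (η h) (tCoact coactBX coactBY (x ⊗ₜ[k] y))) := by
        rw [hactY.contract_tCoact hactX hη, omega2_eq_ydBraid_comp_comm]
        simp
    _ = contract (η h) (LinearMap.lTensor B (omega2 actX coactY)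
          (tCoact coactBX coactBY (x ⊗ₜ[k] y))) := (contract_lTensor _ _ _).symm

end Omega2

section Omega

variable {ω : A →ₗ[k] B →ₗ[k] k} {SA' : A →ₗ[k] A} {SB' : B →ₗ[k] B}

lemma IsHopfPairing.twist (hω : IsHopfPairing ω) (hSA : IsInverseAntipode SA')
    (hSB : IsInverseAntipode SB') : IsHopfPairing (ω.compl₂ (SB' ∘ₗ SB')) :=
  hω.compl₂ (f := hSB.sq) (g := hSA.sq) fun h c =>
    (hω.apply_inverseAntipode hSA hSB (SA' h) c).trans
      (hω.apply_inverseAntipode hSA hSB h (SB' c))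

lemma IsInverseCopairing.twist {n : ℕ} {b : Fin n → B} {a : Fin n → A}
    (hcop : IsInverseCopairing ω b a) (hSB : IsInverseAntipode SB') :
    IsInverseCopairing (ω.compl₂ (SB' ∘ₗ SB'))
      ((HopfAlgebra.antipode k ∘ₗ HopfAlgebra.antipode k) ∘ b) a :=
  hcop.compl₂ (LinearMap.ext fun c => by simp [hSB.apply_antipode])
    (LinearMap.ext fun c => by simp [hSB.antipode_apply])

lemma isInducedAction_omegaAct (ω : A →ₗ[k] B →ₗ[k] k) (SB' : B →ₗ[k] B)
    (coact : X →ₗ[k] A ⊗[k] X) :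
    IsInducedAction (ω.compl₂ (SB' ∘ₗ SB')).flip coact (omegaAct ω SB' coact) := by
  intro c x
  simp only [omegaAct, LinearMap.comp_apply, LinearMap.rTensor_tmul, LinearMap.lTensor_tmul]
  induction coact x with
  | zero => simp
  | tmul h x => simp
  | add s t hs ht => simp only [map_add, tmul_add, hs, ht]

lemma isInducedAction_omegaCoact {n : ℕ} {b : Fin n → B} {a : Fin n → A}
    (hcop : IsInverseCopairing ω b a) (hSB : IsInverseAntipode SB')
    (act : A ⊗[k] X →ₗ[k] X) :
    IsInducedAction (ω.compl₂ (SB' ∘ₗ SB')) (omegaCoact b a act) act := by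
  intro h x
  calc act (h ⊗ₜ[k] x) = act ((∑ i, ω h (b i) • a i) ⊗ₜ[k] x) := by rw [hcop.1]
    _ = contract (ω.compl₂ (SB' ∘ₗ SB') h) (omegaCoact b a act x) := by
      simp [omegaCoact, hSB.apply_antipode, sum_tmul, ← smul_tmul']

end Omega

/-- For a non-degenerate Hopf pairing `ω : A × B → k` with inverse
copairing `Σᵢ bᵢ ⊗ aᵢ` and bijective antipodes, and a left Yetter–Drinfel'd module
`(X, ρ, δ)` over `A`: (1) `Ω(X)`, with `b·x = ω(x₍₋₁₎, S_B⁻²(b)) x₍₀₎` and coaction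
`x ↦ Σᵢ S_B²(bᵢ) ⊗ (aᵢ·x)`, is a left Yetter–Drinfel'd module over `B`; and
(2) `Ω₂(x ⊗ y) = (y₍₋₁₎·x) ⊗ y₍₀₎` is a `B`-linear, `B`-colinear bijection
`Ω(X) ⊗ Ω(Y) → Ω(X ⊗ Y)`. -/
theorem omega_functor (ω : A →ₗ[k] B →ₗ[k] k) (hω : IsHopfPairing ω)
    {n : ℕ} (b : Fin n → B) (a : Fin n → A) (hcop : IsInverseCopairing ω b a)
    (SA' : A →ₗ[k] A) (SB' : B →ₗ[k] B)
    (hSA : SA' ∘ₗ HopfAlgebra.antipode (R := k) = LinearMap.id ∧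
      HopfAlgebra.antipode (R := k) ∘ₗ SA' = LinearMap.id)
    (hSB : SB' ∘ₗ HopfAlgebra.antipode (R := k) = LinearMap.id ∧
      HopfAlgebra.antipode (R := k) ∘ₗ SB' = LinearMap.id)
    (actX : A ⊗[k] X →ₗ[k] X) (coactX : X →ₗ[k] A ⊗[k] X)
    (actY : A ⊗[k] Y →ₗ[k] Y) (coactY : Y →ₗ[k] A ⊗[k] Y)
    (hX : IsYD actX coactX) (hY : IsYD actY coactY) :
    -- (1) `Ω(X)` is a left Yetter–Drinfel'd module over `B`
    IsYD (omegaAct ω SB' coactX) (omegaCoact b a actX)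
    -- (2) `Ω₂` is a bijection ...
    ∧ Function.Bijective (omega2 actX coactY)
    -- ... which is `B`-linear ...
    ∧ (omega2 actX coactY ∘ₗ tAct (omegaAct ω SB' coactX) (omegaAct ω SB' coactY)
        = omegaAct ω SB' (tCoact coactX coactY)
            ∘ₗ LinearMap.lTensor B (omega2 actX coactY))
    -- ... and `B`-colinear
    ∧ (omegaCoact b a (tAct actX actY) ∘ₗ omega2 actX coactY
        = LinearMap.lTensor B (omega2 actX coactY)
            ∘ₗ tCoact (omegaCoact b a actX) (omegaCoact b a actY)) := by
  have hη : IsHopfPairing (ω.compl₂ (SB' ∘ₗ SB')) := hω.twist hSA hSB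
  have hcopη := hcop.twist hSB
  have hXact := isInducedAction_omegaAct ω SB' coactX
  have hYact := isInducedAction_omegaAct ω SB' coactY
  have hXcoact := isInducedAction_omegaCoact hcop hSB actX
  have hYcoact := isInducedAction_omegaCoact hcop hSB actY
  refine ⟨hXcoact.isYD hXact hη hcopη hX, ?_, ?_, ?_⟩
  · rw [omega2_eq_ydBraid_comp_comm]
    exact (ydBraid_bijective hY hX hSA).comp (TensorProduct.comm k X Y).bijective
  · exact omega2_comp_tAct hX hY hη hXact hYact (isInducedAction_omegaAct ω SB' _)
  · exact lTensor_omega2_comp_tCoact hX hY hη hcopη hXcoact hYcoact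
      (isInducedAction_omegaCoact hcop hSB _)

end Pairing

end
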